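/- Let (V, ≤) be a finite tree order and for u, v ∈ V let LCA(u, v) denote the greatest lower bound of {u, v}. For every nonempty finite set S ⊆ V, the closure of S under the binary operation LCA equals S ∪ {LCA(u, v) : u, v ∈ S} (one closure step suffices), and this closure has at most 2|S| − 1 elements. -/

import Mathlib

/-!
Write `⊓` for the lowest common ancestor. Both `x ⊓ y` and `y ⊓ z` lie below `y`, hence are
comparable, so `x ⊓ y ⊓ z` is one of them (`inf_inf_eq_or`). Applying this twice, the meet of
four elements is already a meet of two of them, so the set of pairwise meets of elements of `S`,
which contains `S` by idempotence, is closed under `⊓`.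

For the count, adding a point `a` to `S` creates at most two new pairwise meets: `a` itself and the
largest meet `a ⊓ s₀` with `s₀ ∈ S`. Indeed, if `a ⊓ s` is not this largest meet, then
`a ⊓ s = a ⊓ s₀ ⊓ s` equals `s₀ ⊓ s`, an old meet. Induction on `S` gives the bound `2 |S| - 1`.
-/

/-- The closure of a set `A` under the binary lowest-common-ancestor operation `lca`:
the smallest superset of `A` closed under `lca`. -/
def lcaClosure {V : Type*} (lca : V → V → V) (A : Set V) : Set V :=
  ⋂₀ {B : Set V | A ⊆ B ∧ ∀ u ∈ B, ∀ v ∈ B, lca u v ∈ B}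

/-- In a tree order, the meet of three elements is already attained by two of them. -/
lemma inf_inf_eq_or {V : Type*} [SemilatticeInf V]
    (hchain : ∀ p : V, IsChain (· ≤ ·) {q : V | q ≤ p}) (x y z : V) :
    x ⊓ y ⊓ z = x ⊓ y ∨ x ⊓ y ⊓ z = y ⊓ z := by
  have e : x ⊓ y ⊓ z = (x ⊓ y) ⊓ (y ⊓ z) := by
    rw [← inf_assoc, inf_assoc x y y, inf_idem]
  rcases (hchain y).total (show x ⊓ y ≤ y from inf_le_right)
    (show y ⊓ z ≤ y from inf_le_left) with h | h
  · exact Or.inl (e.trans (inf_eq_left.2 h))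
  · exact Or.inr (e.trans (inf_eq_right.2 h))

lemma inf_mem_image2_inf {V : Type*} [SemilatticeInf V]
    (hchain : ∀ p : V, IsChain (· ≤ ·) {q : V | q ≤ p}) {A : Set V} {u v : V}
    (hu : u ∈ Set.image2 (· ⊓ ·) A A) (hv : v ∈ Set.image2 (· ⊓ ·) A A) :
    u ⊓ v ∈ Set.image2 (· ⊓ ·) A A := by
  have key : ∀ w ∈ Set.image2 (· ⊓ ·) A A, ∀ c ∈ A, w ⊓ c ∈ Set.image2 (· ⊓ ·) A A := by
    rintro _ ⟨a, ha, b, hb, rfl⟩ c hc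
    rcases inf_inf_eq_or hchain a b c with h | h
    · exact ⟨a, ha, b, hb, h.symm⟩
    · exact ⟨b, hb, c, hc, h.symm⟩
  obtain ⟨c, hc, d, hd, rfl⟩ := hv
  have := key _ (key u hu c hc) d hd
  rwa [inf_assoc] at this

/-- Adding a point to a nonempty finite set creates at most two new pairwise meets. -/
lemma exists_image2_inf_insert_subset {V : Type*} [SemilatticeInf V]
    (hchain : ∀ p : V, IsChain (· ≤ ·) {q : V | q ≤ p}) {S : Finset V} (hS : S.Nonempty) (a : V) :
    ∃ m, Set.image2 (· ⊓ ·) (insert a (S : Set V)) (insert a (S : Set V)) ⊆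
      insert a (insert m (Set.image2 (· ⊓ ·) (S : Set V) (S : Set V))) := by
  classical
  obtain ⟨m, hm⟩ := (S.image (a ⊓ ·)).exists_maximal (hS.image _)
  obtain ⟨s₀, hs₀, rfl⟩ := Finset.mem_image.1 hm.prop
  have key : ∀ s ∈ S, a ⊓ s = a ⊓ s₀ ∨ a ⊓ s = s₀ ⊓ s := by
    intro s hs
    have hle : a ⊓ s ≤ a ⊓ s₀ := by
      rcases (hchain a).total (show a ⊓ s ≤ a from inf_le_left)
        (show a ⊓ s₀ ≤ a from inf_le_left) with h | h
      · exact h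
      · exact hm.le_of_ge (Finset.mem_image_of_mem _ hs) h
    have e : a ⊓ s₀ ⊓ s = a ⊓ s :=
      le_antisymm (inf_le_inf_right _ inf_le_left) (le_inf hle inf_le_right)
    rw [← e]
    exact inf_inf_eq_or hchain a s₀ s
  have key' : ∀ s ∈ S, a ⊓ s ∈
      insert a (insert (a ⊓ s₀) (Set.image2 (· ⊓ ·) (S : Set V) (S : Set V))) := by
    intro s hs
    rcases key s hs with h | h
    · exact Or.inr (Or.inl h)
    · exact Or.inr (Or.inr ⟨s₀, hs₀, s, hs, h.symm⟩)
  refine ⟨a ⊓ s₀, ?_⟩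
  rintro _ ⟨x, hx, y, hy, rfl⟩
  rcases hx with hx | hx <;> rcases hy with hy | hy
  · subst hx hy
    exact Or.inl (inf_idem _)
  · subst hx
    exact key' y hy
  · subst hy
    have h := key' x hx
    rwa [inf_comm y x] at h
  · exact Or.inr (Or.inr ⟨x, hx, y, hy, rfl⟩)

lemma ncard_image2_inf_le {V : Type*} [SemilatticeInf V]
    (hchain : ∀ p : V, IsChain (· ≤ ·) {q : V | q ≤ p}) {S : Finset V} (hS : S.Nonempty) :
    (Set.image2 (· ⊓ ·) (S : Set V) (S : Set V)).ncard ≤ 2 * S.card - 1 := by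
  induction hS using Finset.Nonempty.cons_induction with
  | singleton a => simp
  | cons a S ha hS ih =>
    obtain ⟨m, hm⟩ := exists_image2_inf_insert_subset hchain hS a
    have hfin : (Set.image2 (· ⊓ ·) (S : Set V) (S : Set V)).Finite :=
      S.finite_toSet.image2 _ S.finite_toSet
    have h1 := Set.ncard_le_ncard hm ((hfin.insert m).insert a)
    have h2 := Set.ncard_insert_le a (insert m (Set.image2 (· ⊓ ·) (S : Set V) (S : Set V)))
    have h3 := Set.ncard_insert_le m (Set.image2 (· ⊓ ·) (S : Set V) (S : Set V))
    have h4 := hS.card_pos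
    rw [Finset.coe_cons, Finset.card_cons]
    omega

/-- In a finite tree order, for every nonempty finite set `S`, the closure of
`S` under the binary lowest-common-ancestor operation equals `S ∪ {LCA(u,v) : u, v ∈ S}`
(one closure step suffices), and this closure has at most `2|S| − 1` elements. -/
theorem lca_closure_one_step (V : Type*) [Fintype V] [PartialOrder V]
    (root : V) (hroot : ∀ p, root ≤ p)
    (hchain : ∀ p : V, IsChain (· ≤ ·) {q : V | q ≤ p})
    (lca : V → V → V) (hlca : ∀ u v : V, IsGLB {u, v} (lca u v))
    (S : Finset V) (hS : S.Nonempty) :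
    lcaClosure lca (S : Set V) = (S : Set V) ∪ Set.image2 lca (S : Set V) (S : Set V) ∧
      (lcaClosure lca (S : Set V)).ncard ≤ 2 * S.card - 1 := by
  let _ : SemilatticeInf V :=
    { ‹PartialOrder V› with
      inf := lca
      inf_le_left := fun u v => (hlca u v).1 (Set.mem_insert u {v})
      inf_le_right := fun u v => (hlca u v).1 (Set.mem_insert_of_mem u rfl)
      le_inf := fun w u v hu hv => (hlca u v).2 (by
        rintro x (rfl | rfl)
        exacts [hu, hv]) }
  have hsub : (S : Set V) ⊆ Set.image2 lca (S : Set V) (S : Set V) :=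
    fun s hs => ⟨s, hs, s, hs, inf_idem s⟩
  have hcl : lcaClosure lca (S : Set V) = Set.image2 lca (S : Set V) (S : Set V) := by
    apply Set.Subset.antisymm
    · exact Set.sInter_subset_of_mem
        ⟨hsub, fun u hu v hv => inf_mem_image2_inf hchain hu hv⟩
    · rintro _ ⟨u, hu, v, hv, rfl⟩ B ⟨hB, hBcl⟩
      exact hBcl u (hB hu) v (hB hv)
  rw [hcl, Set.union_eq_self_of_subset_left hsub]
  exact ⟨rfl, ncard_image2_inf_le hchain hS⟩
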